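/- arXiv:1401.7189 — 2 statements merged into one kernel-verified Lean document; each statement's English description precedes it below -/
import Mathlib

section
/- For Im(τ) > 0 and 0 < Im(z) < Im(τ), the identity (q;q)_∞² / ((ζ;q)_∞ (ζ^{-1}q;q)_∞) = ∑_{n∈ℤ} (−1)^n q^{n(n+1)/2} / (1 − ζ q^n) holds, where q = e^{2πiτ} and ζ = e^{2πiz}. -/
open Complex

/-!
Expanding `ζ ^ N / ∏_{|m| ≤ N} (1 - ζ q ^ m)` in partial fractions in `ζ` and moving the factors of
negative index to `1 - ζ⁻¹ q ^ j`, with `(a;q)_k = ∏_{j < k} (1 - a q ^ j)`, gives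
`1 / ((ζ;q)_{N+1} (ζ⁻¹q;q)_N) =
  ∑_{|n| ≤ N} (-1)^n q^{n(n+1)/2} / ((1 - ζ q ^ n) (q;q)_{N-n} (q;q)_{N+n})`.
The factors `1 / (q;q)_k` are bounded and converge to `1 / (q;q)_∞`, and the rest of the summand is
absolutely summable over `ℤ`, so dominated convergence yields the identity as `N → ∞`.
-/

open Filter Topology Finset Polynomial Asymptotics

section Finite

lemma two_mul_mul_add_one_ediv_two (n : ℤ) : 2 * (n * (n + 1) / 2) = n * (n + 1) :=
  Int.mul_ediv_cancel' (Int.even_mul_succ_self n).two_dvd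

lemma prod_Icc_neg_erase_zero {M : Type*} [CommMonoid M] (f : ℤ → M) (k l : ℕ) :
    ∏ m ∈ (Icc (-(k : ℤ)) l).erase 0, f m =
      (∏ j ∈ range l, f (j + 1)) * ∏ j ∈ range k, f (-(j + 1)) := by
  have h : (Icc (-(k : ℤ)) l).erase 0 =
      (range l).image (fun j : ℕ ↦ (j : ℤ) + 1) ∪ (range k).image (fun j : ℕ ↦ -((j : ℤ) + 1)) := by
    ext m
    simp only [mem_erase, mem_Icc, mem_union, mem_image, mem_range]
    constructor
    · rintro ⟨hm, hk, hl⟩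
      rcases hm.lt_or_gt with hm | hm
      · exact .inr ⟨(-m - 1).toNat, by omega, by omega⟩
      · exact .inl ⟨(m - 1).toNat, by omega, by omega⟩
    · rintro (⟨j, hj, rfl⟩ | ⟨j, hj, rfl⟩) <;> omega
  rw [h, prod_union, prod_image (by simp), prod_image (by simp)]
  rw [disjoint_left]
  simp only [mem_image, mem_range]
  rintro _ ⟨i, -, rfl⟩ ⟨j, -, hj⟩
  omega

variable {K : Type*} [Field K]

lemma eval_div_prod_one_sub_mul {ι : Type*} [DecidableEq ι] {s : Finset ι} {a : ι → K} {x : K}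
    {f : K[X]} (ha₀ : ∀ i ∈ s, a i ≠ 0) (ha : Set.InjOn a s) (hx : ∀ i ∈ s, x * a i ≠ 1)
    (hf : f.degree < #s) :
    f.eval x / ∏ i ∈ s, (1 - x * a i) =
      ∑ i ∈ s, f.eval (a i)⁻¹ / ((1 - x * a i) * ∏ j ∈ s.erase i, (1 - (a i)⁻¹ * a j)) := by
  have hinj : Set.InjOn (fun i ↦ (a i)⁻¹) s := fun i hi j hj h ↦ ha hi hj (inv_injective h)
  have hne : ∀ i ∈ s, x ≠ (a i)⁻¹ := fun i hi h ↦ hx i hi (h ▸ inv_mul_cancel₀ (ha₀ i hi))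
  have lagrange := Lagrange.eval_interpolate_not_at_node (fun i ↦ f.eval (a i)⁻¹) hne
  rw [← Lagrange.eq_interpolate_of_eval_eq _ hinj hf fun _ _ ↦ rfl, Lagrange.eval_nodal] at lagrange
  have hfactor : ∀ y, ∀ t ⊆ s,
      ∏ j ∈ t, (y - (a j)⁻¹) = (∏ j ∈ t, -(a j)⁻¹) * ∏ j ∈ t, (1 - y * a j) := by
    intro y t ht
    rw [← prod_mul_distrib]
    refine prod_congr rfl fun j hj ↦ ?_
    have := ha₀ j (ht hj)
    field_simp
    ring
  have hden : ∀ i ∈ s, 1 - x * a i ≠ 0 := fun i hi ↦ sub_ne_zero.mpr (hx i hi).symm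
  rw [lagrange, hfactor x s Subset.rfl, mul_right_comm,
    mul_div_cancel_right₀ _ (prod_ne_zero_iff.mpr hden), mul_sum]
  refine sum_congr rfl fun i hi ↦ ?_
  have hscale : ∏ j ∈ s.erase i, -(a j)⁻¹ ≠ 0 :=
    prod_ne_zero_iff.mpr fun j hj ↦ neg_ne_zero.mpr (inv_ne_zero (ha₀ j (mem_of_mem_erase hj)))
  have hnode : x - (a i)⁻¹ = -(a i)⁻¹ * (1 - x * a i) := by
    simpa using hfactor x {i} (singleton_subset_iff.mpr hi)
  have hi₀ : -(a i)⁻¹ ≠ 0 := neg_ne_zero.mpr (inv_ne_zero (ha₀ i hi))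
  rw [Lagrange.nodalWeight, prod_inv_distrib, hfactor _ _ (erase_subset i s), hnode,
    ← mul_prod_erase _ _ hi]
  generalize ∏ j ∈ s.erase i, -(a j)⁻¹ = D at *
  generalize -(a i)⁻¹ = c at *
  field_simp

/-- The finite `q`-Pochhammer symbol `(a;q)_n`. -/
def qPochhammer {R : Type*} [CommRing R] (a q : R) (n : ℕ) : R := ∏ j ∈ range n, (1 - a * q ^ j)

lemma mul_zpow_neg_add_one (x q : K) (j : ℕ) : x * q ^ (-(j + 1) : ℤ) = (x⁻¹ * q * q ^ j)⁻¹ := by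
  rw [zpow_neg, ← Nat.cast_succ, zpow_natCast, mul_assoc, ← pow_succ', mul_inv, inv_inv]

lemma prod_one_sub_mul_zpow_neg {x q : K} (hx : x ≠ 0) (hq : q ≠ 0) (k : ℕ) :
    ∏ j ∈ range k, (1 - x * q ^ (-(j + 1) : ℤ)) =
      (-x) ^ k * q ^ (-(k * (k + 1) / 2) : ℤ) * qPochhammer (x⁻¹ * q) q k := by
  induction k with
  | zero => simp [qPochhammer]
  | succ k ih =>
    have hexp : (-((k + 1 : ℕ) * ((k + 1 : ℕ) + 1) / 2) : ℤ) =
        -(k * (k + 1) / 2) + -(k + 1) := by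
      have h := two_mul_mul_add_one_ediv_two k
      have h' := two_mul_mul_add_one_ediv_two (k + 1 : ℕ)
      push_cast at h' ⊢
      linarith
    have hfactor : 1 - x * q ^ (-(k + 1) : ℤ) =
        -x * q ^ (-(k + 1) : ℤ) * (1 - x⁻¹ * q * q ^ k) := by
      rw [neg_mul, mul_zpow_neg_add_one]
      field_simp
      ring
    rw [qPochhammer, prod_range_succ, ih, prod_range_succ, hfactor, hexp, zpow_add₀ hq, qPochhammer]
    ring

lemma prod_Icc_one_sub_zpow_erase_zero {q : K} (hq : q ≠ 0) (k l : ℕ) :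
    ∏ m ∈ (Icc (-(k : ℤ)) l).erase 0, (1 - q ^ m) =
      (-1) ^ k * q ^ (-(k * (k + 1) / 2) : ℤ) * (qPochhammer q q l * qPochhammer q q k) := by
  have hneg := prod_one_sub_mul_zpow_neg one_ne_zero hq k
  simp only [one_mul, inv_one] at hneg
  have hpos : ∏ j ∈ range l, (1 - q ^ ((j : ℤ) + 1)) = qPochhammer q q l :=
    prod_congr rfl fun j _ ↦ by rw [zpow_add_one₀ hq, zpow_natCast, mul_comm]
  rw [prod_Icc_neg_erase_zero, hneg, hpos]
  ring

lemma prod_Icc_one_sub_mul_zpow {x q : K} (hx : x ≠ 0) (hq : q ≠ 0) (k l : ℕ) :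
    ∏ m ∈ Icc (-(k : ℤ)) l, (1 - x * q ^ m) =
      (-x) ^ k * q ^ (-(k * (k + 1) / 2) : ℤ) *
        (qPochhammer x q (l + 1) * qPochhammer (x⁻¹ * q) q k) := by
  have hpos : (1 - x * q ^ (0 : ℤ)) * ∏ j ∈ range l, (1 - x * q ^ ((j : ℤ) + 1)) =
      qPochhammer x q (l + 1) := by
    rw [qPochhammer, prod_range_succ', mul_comm]
    simp [← zpow_natCast]
  rw [← mul_prod_erase _ _ (mem_Icc.mpr ⟨by omega, by omega⟩ : (0 : ℤ) ∈ Icc (-(k : ℤ)) l),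
    prod_Icc_neg_erase_zero, prod_one_sub_mul_zpow_neg hx hq, ← mul_assoc, hpos]
  ring

lemma prod_Icc_erase_one_sub_inv_mul_zpow {q : K} (hq : q ≠ 0) {N : ℕ} {n : ℤ}
    (hn : n ∈ Icc (-N : ℤ) N) :
    ∏ m ∈ (Icc (-N : ℤ) N).erase n, (1 - (q ^ n)⁻¹ * q ^ m) =
      (-1) ^ (N + n) * q ^ (-((N + n) * (N + n + 1) / 2)) *
        (qPochhammer q q (N - n).toNat * qPochhammer q q (N + n).toNat) := by
  rw [mem_Icc] at hn
  obtain ⟨k, hk⟩ : ∃ k : ℕ, (k : ℤ) = N + n := ⟨(N + n).toNat, by omega⟩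
  obtain ⟨l, hl⟩ : ∃ l : ℕ, (l : ℤ) = N - n := ⟨(N - n).toNat, by omega⟩
  rw [← hk, ← hl, Int.toNat_natCast, Int.toNat_natCast, zpow_natCast,
    ← prod_Icc_one_sub_zpow_erase_zero hq]
  refine prod_bij' (fun m _ ↦ m - n) (fun m _ ↦ m + n) ?_ ?_ ?_ ?_ ?_
  · simp only [mem_erase, mem_Icc]; omega
  · simp only [mem_erase, mem_Icc]; omega
  · simp
  · simp
  · intro m _
    rw [zpow_sub₀ hq, div_eq_inv_mul]

lemma neg_one_zpow_mul_zpow_triangle {q : K} (hq : q ≠ 0) (N : ℕ) (n : ℤ) :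
    (-1) ^ n * q ^ (n * (n + 1) / 2) =
      (-1) ^ N * q ^ (-(N * (N + 1) / 2) : ℤ) * (q ^ n)⁻¹ ^ N /
        ((-1) ^ (N + n) * q ^ (-((N + n) * (N + n + 1) / 2))) := by
  have hsign : (-1 : K) ^ n * (-1) ^ n = 1 := by rw [← mul_zpow]; simp
  have hexp : q ^ (n * (n + 1) / 2) * q ^ (-((N + n) * (N + n + 1) / 2)) =
      q ^ (-(N * (N + 1) / 2) : ℤ) * (q ^ n)⁻¹ ^ N := by
    rw [← zpow_neg, ← zpow_natCast, ← zpow_mul, ← zpow_add₀ hq, ← zpow_add₀ hq]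
    congr 1
    linarith [two_mul_mul_add_one_ediv_two N, two_mul_mul_add_one_ediv_two n,
      two_mul_mul_add_one_ediv_two (N + n)]
  have hneg : (-1 : K) ≠ 0 := neg_ne_zero.mpr one_ne_zero
  rw [eq_div_iff (mul_ne_zero (zpow_ne_zero _ hneg) (zpow_ne_zero _ hq)), zpow_add₀ hneg,
    zpow_natCast]
  linear_combination (-1) ^ N * hexp + (-1) ^ N * q ^ (n * (n + 1) / 2) *
    q ^ (-((N + n) * (N + n + 1) / 2)) * hsign

theorem inv_qPochhammer_mul_qPochhammer {ζ q : K} (hq : Function.Injective fun n : ℤ ↦ q ^ n)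
    (hζ₀ : ζ ≠ 0) (hζ : ∀ n : ℤ, ζ * q ^ n ≠ 1) (N : ℕ) :
    (qPochhammer ζ q (N + 1) * qPochhammer (ζ⁻¹ * q) q N)⁻¹ =
      ∑ n ∈ Icc (-N : ℤ) N, (-1) ^ n * q ^ (n * (n + 1) / 2) / (1 - ζ * q ^ n) *
        ((qPochhammer q q (N - n).toNat)⁻¹ * (qPochhammer q q (N + n).toNat)⁻¹) := by
  have hq₀ : q ≠ 0 := by
    rintro rfl
    exact absurd (hq (a₁ := 1) (a₂ := 2) (by simp)) (by decide)
  have hdeg : (X ^ N : K[X]).degree < #(Icc (-N : ℤ) N) := by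
    rw [degree_X_pow, Int.card_Icc]
    exact_mod_cast (by omega : N < (N + 1 - -N : ℤ).toNat)
  have hpartial := eval_div_prod_one_sub_mul (fun n _ ↦ zpow_ne_zero n hq₀) hq.injOn
    (fun n _ ↦ hζ n) hdeg
  simp only [eval_pow, eval_X] at hpartial
  calc (qPochhammer ζ q (N + 1) * qPochhammer (ζ⁻¹ * q) q N)⁻¹
      = (-1) ^ N * q ^ (-(N * (N + 1) / 2) : ℤ) *
          (ζ ^ N / ∏ m ∈ Icc (-N : ℤ) N, (1 - ζ * q ^ m)) := by
        have := zpow_ne_zero (-(N * (N + 1) / 2) : ℤ) hq₀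
        rw [prod_Icc_one_sub_mul_zpow hζ₀ hq₀, neg_pow ζ N]
        field_simp
    _ = _ := by
        rw [hpartial, mul_sum]
        refine sum_congr rfl fun n hn ↦ ?_
        rw [prod_Icc_erase_one_sub_inv_mul_zpow hq₀ hn, neg_one_zpow_mul_zpow_triangle hq₀ N n]
        simp only [div_eq_mul_inv, mul_inv]
        ring

end Finite

section Limit

lemma tendsto_sum_of_dominated_convergence {α β G : Type*} {𝓕 : Filter α} [NormedAddCommGroup G]
    [CompleteSpace G] {s : α → Finset β} {f : α → β → G} {g : β → G} {bound : β → ℝ}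
    (hs : Tendsto s 𝓕 atTop) (h_sum : Summable bound) (hfg : ∀ b, Tendsto (f · b) 𝓕 (𝓝 (g b)))
    (h_bound : ∀ᶠ a in 𝓕, ∀ b, ‖f a b‖ ≤ bound b) :
    Tendsto (fun a ↦ ∑ b ∈ s a, f a b) 𝓕 (𝓝 (∑' b, g b)) := by
  have hsum (a : α) : ∑ b ∈ s a, f a b = ∑' b, Set.indicator (s a) (f a) b :=
    sum_eq_tsum_indicator _ _
  simp only [hsum]
  refine tendsto_tsum_of_dominated_convergence h_sum (fun b ↦ (hfg b).congr' ?_) ?_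
  · filter_upwards [hs.eventually_ge_atTop {b}] with a ha
    rw [Set.indicator_of_mem (ha (mem_singleton_self b))]
  · filter_upwards [h_bound] with a ha b
    exact (norm_indicator_le_norm_self _ _).trans (ha b)

/-- The infinite `q`-Pochhammer symbol `(a;q)_∞`. -/
noncomputable def qPochhammerInf {R : Type*} [CommRing R] [TopologicalSpace R] (a q : R) : R :=
  ∏' j : ℕ, (1 - a * q ^ j)

variable {𝕜 : Type*} [NormedField 𝕜] {q : 𝕜}

lemma summable_norm_neg_mul_pow (hq : ‖q‖ < 1) (a : 𝕜) : Summable fun j : ℕ ↦ ‖-(a * q ^ j)‖ := by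
  simpa only [norm_neg, norm_mul, norm_pow] using
    (summable_geometric_of_lt_one (norm_nonneg q) hq).mul_left ‖a‖

lemma tendsto_qPochhammer [CompleteSpace 𝕜] (hq : ‖q‖ < 1) (a : 𝕜) :
    Tendsto (qPochhammer a q) atTop (𝓝 (qPochhammerInf a q)) := by
  have h := multipliable_one_add_of_summable (summable_norm_neg_mul_pow hq a)
  simp only [← sub_eq_add_neg] at h
  exact h.tendsto_prod_tprod_nat

lemma qPochhammerInf_ne_zero [CompleteSpace 𝕜] (hq : ‖q‖ < 1) {a : 𝕜}
    (ha : ∀ j : ℕ, a * q ^ j ≠ 1) : qPochhammerInf a q ≠ 0 := by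
  simp only [qPochhammerInf, sub_eq_add_neg]
  refine tprod_one_add_ne_zero_of_summable (fun j ↦ ?_) (summable_norm_neg_mul_pow hq a)
  rw [← sub_eq_add_neg]
  exact sub_ne_zero.mpr (ha j).symm

lemma qPochhammerInf_self_ne_zero [CompleteSpace 𝕜] (hq : ‖q‖ < 1) : qPochhammerInf q q ≠ 0 :=
  qPochhammerInf_ne_zero hq fun j h ↦ by
    have hlt : ‖q * q ^ j‖ < 1 := by
      rw [← pow_succ', norm_pow]
      exact pow_lt_one₀ (norm_nonneg q) hq j.succ_ne_zero
    rw [h, norm_one] at hlt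
    exact hlt.false

lemma summable_norm_pow_triangle_div_one_sub (hq : ‖q‖ < 1) (a : 𝕜) :
    Summable fun n : ℕ ↦ ‖q ^ (n * (n + 1) / 2) / (1 - a * q ^ n)‖ := by
  have hgeom : Summable fun n : ℕ ↦ ‖q‖ ^ n := summable_geometric_of_lt_one (norm_nonneg q) hq
  have hnum : Summable fun n : ℕ ↦ ‖q ^ (n * (n + 1) / 2)‖ := by
    refine hgeom.of_nonneg_of_le (fun _ ↦ norm_nonneg _) fun n ↦ ?_
    rw [norm_pow]
    refine pow_le_pow_of_le_one (norm_nonneg q) hq.le ?_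
    rw [Nat.le_div_iff_mul_le two_pos]
    rcases n.eq_zero_or_pos with rfl | hn
    · rfl
    · gcongr; omega
  have hden : Tendsto (fun n : ℕ ↦ (1 - a * q ^ n)⁻¹) atTop (𝓝 1) := by
    simpa using ((tendsto_const_nhds (x := (1 : 𝕜))).sub
      ((tendsto_pow_atTop_nhds_zero_of_norm_lt_one hq).const_mul a)).inv₀ (by simp)
  refine summable_of_isBigO_nat hnum (IsBigO.norm_norm ?_)
  simpa only [div_eq_mul_inv, mul_one] using (isBigO_refl _ _).mul (hden.isBigO_one 𝕜)

lemma summable_norm_zpow_triangle_div_one_sub (hq₀ : q ≠ 0) (hq : ‖q‖ < 1) {ζ : 𝕜} (hζ₀ : ζ ≠ 0) :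
    Summable fun n : ℤ ↦ ‖q ^ (n * (n + 1) / 2) / (1 - ζ * q ^ n)‖ := by
  have htriangle (n : ℕ) : q ^ ((n : ℤ) * (n + 1) / 2) = q ^ (n * (n + 1) / 2) := by
    rw [← zpow_natCast]
    push_cast
    rfl
  refine .of_nat_of_neg_add_one ?_ ?_
  · simpa only [htriangle, zpow_natCast] using summable_norm_pow_triangle_div_one_sub hq ζ
  · refine ((summable_norm_pow_triangle_div_one_sub hq (ζ⁻¹ * q)).mul_left
      ‖ζ⁻¹ * q‖).of_nonneg_of_le (fun _ ↦ norm_nonneg _) fun n ↦ ?_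
    have hexp : -(n + 1 : ℤ) * (-(n + 1) + 1) / 2 = n * (n + 1) / 2 := by
      congr 1
      ring
    have hy : ζ⁻¹ * q * q ^ n ≠ 0 := by positivity
    have hreflect (X y : 𝕜) (hy : y ≠ 0) : X / (1 - y⁻¹) = -(y * (X / (1 - y))) := by
      have hden : 1 - y⁻¹ = -(y⁻¹ * (1 - y)) := by
        field_simp
        ring
      rw [hden, div_neg, ← div_div, div_inv_eq_mul, mul_comm X, mul_div_assoc]
    have hle : ‖ζ⁻¹ * q * q ^ n‖ ≤ ‖ζ⁻¹ * q‖ := by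
      rw [norm_mul _ (q ^ n), norm_pow]
      exact mul_le_of_le_one_right (norm_nonneg _) (pow_le_one₀ (norm_nonneg q) hq.le)
    rw [mul_zpow_neg_add_one, hexp, htriangle, hreflect _ _ hy, norm_neg, norm_mul]
    gcongr

lemma tendsto_sum_mul_inv_qPochhammer [CompleteSpace 𝕜] (hq : ‖q‖ < 1) {a : ℤ → 𝕜}
    (ha : Summable fun n ↦ ‖a n‖) :
    Tendsto (fun N : ℕ ↦ ∑ n ∈ Icc (-N : ℤ) N,
        a n * ((qPochhammer q q (N - n).toNat)⁻¹ * (qPochhammer q q (N + n).toNat)⁻¹)) atTop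
      (𝓝 ((∑' n, a n) * ((qPochhammerInf q q)⁻¹ * (qPochhammerInf q q)⁻¹))) := by
  have hinv : Tendsto (fun k ↦ (qPochhammer q q k)⁻¹) atTop (𝓝 (qPochhammerInf q q)⁻¹) :=
    (tendsto_qPochhammer hq q).inv₀ (qPochhammerInf_self_ne_zero hq)
  obtain ⟨C, hC⟩ := (Metric.isBounded_range_of_tendsto _ hinv).exists_norm_le
  have hbound (k : ℕ) : ‖(qPochhammer q q k)⁻¹‖ ≤ C := hC _ ⟨k, rfl⟩
  rw [← tsum_mul_right]
  refine tendsto_sum_of_dominated_convergence tendsto_Icc_neg (ha.mul_right (C * C))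
    (fun n ↦ .const_mul _ (.mul (hinv.comp ?_) (hinv.comp ?_))) (.of_forall fun N n ↦ ?_)
  · exact tendsto_atTop_atTop.mpr fun b ↦ ⟨(b + n).toNat, fun m hm ↦ by omega⟩
  · exact tendsto_atTop_atTop.mpr fun b ↦ ⟨(b - n).toNat, fun m hm ↦ by omega⟩
  · rw [norm_mul, norm_mul]
    have : 0 ≤ C := (norm_nonneg _).trans (hbound 0)
    gcongr <;> exact hbound _

theorem gl11_denominator_identity_general [CompleteSpace 𝕜] {ζ : 𝕜} (hq₀ : q ≠ 0) (hq : ‖q‖ < 1)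
    (hζ₀ : ζ ≠ 0) (hζ : ∀ n : ℤ, ζ * q ^ n ≠ 1) :
    HasSum (fun n : ℤ ↦ (-1) ^ n * q ^ (n * (n + 1) / 2) / (1 - ζ * q ^ n))
      (qPochhammerInf q q ^ 2 / (qPochhammerInf ζ q * qPochhammerInf (ζ⁻¹ * q) q)) := by
  have hinj : Function.Injective fun n : ℤ ↦ q ^ n := fun m n h ↦
    zpow_right_injective₀ (norm_pos_iff.mpr hq₀) hq.ne (by simpa using congrArg norm h)
  have hζ_pos : qPochhammerInf ζ q ≠ 0 := qPochhammerInf_ne_zero hq fun j ↦ by simpa using hζ j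
  have hζ_neg : qPochhammerInf (ζ⁻¹ * q) q ≠ 0 := qPochhammerInf_ne_zero hq fun j h ↦
    hζ (-(j + 1)) (by rw [mul_zpow_neg_add_one, h, inv_one])
  have hsummable : Summable fun n : ℤ ↦
      ‖(-1) ^ n * q ^ (n * (n + 1) / 2) / (1 - ζ * q ^ n)‖ := by
    simpa using summable_norm_zpow_triangle_div_one_sub hq₀ hq hζ₀
  have hleft := (((tendsto_qPochhammer hq ζ).comp (tendsto_add_atTop_nat 1)).mul
    (tendsto_qPochhammer hq (ζ⁻¹ * q))).inv₀ (mul_ne_zero hζ_pos hζ_neg)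
  have hlim := tendsto_nhds_unique (tendsto_sum_mul_inv_qPochhammer hq hsummable)
    (hleft.congr fun N ↦ inv_qPochhammer_mul_qPochhammer hinj hζ₀ hζ N)
  have hQ : qPochhammerInf q q ≠ 0 := qPochhammerInf_self_ne_zero hq
  rw [hsummable.of_norm.hasSum_iff, div_eq_mul_inv, ← hlim]
  field_simp

end Limit

lemma exp_mul_exp_zpow_ne_one {z τ : ℂ} (hz : 0 < z.im) (hzτ : z.im < τ.im) (n : ℤ) :
    exp (2 * (Real.pi : ℂ) * I * z) * exp (2 * (Real.pi : ℂ) * I * τ) ^ n ≠ 1 := by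
  rw [← exp_int_mul, ← exp_add, Ne, exp_eq_one_iff]
  rintro ⟨m, hm⟩
  have hzero : z + n * τ = m := mul_left_cancel₀ two_pi_I_ne_zero (by linear_combination hm)
  have him : z.im + n * τ.im = 0 := by simpa using congrArg im hzero
  rcases le_or_gt 0 n with hn | hn
  · have : (0 : ℝ) ≤ n := by exact_mod_cast hn
    nlinarith
  · have : (n : ℝ) ≤ -1 := by exact_mod_cast (by omega : n ≤ -1)
    nlinarith

theorem gl11_denominator_identity (z τ : ℂ) (hτ : 0 < τ.im)
    (hz : 0 < z.im) (hzτ : z.im < τ.im) :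
    (∏' j : ℕ, (1 - Complex.exp (2 * (Real.pi : ℂ) * I * τ) ^ (j + 1))) ^ 2 /
        ((∏' j : ℕ, (1 - Complex.exp (2 * (Real.pi : ℂ) * I * z) *
            Complex.exp (2 * (Real.pi : ℂ) * I * τ) ^ j)) *
          (∏' j : ℕ, (1 - (Complex.exp (2 * (Real.pi : ℂ) * I * z))⁻¹ *
            Complex.exp (2 * (Real.pi : ℂ) * I * τ) ^ (j + 1)))) =
      ∑' n : ℤ, (-1 : ℂ) ^ n * Complex.exp (2 * (Real.pi : ℂ) * I * τ) ^ (n * (n + 1) / 2) /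
        (1 - Complex.exp (2 * (Real.pi : ℂ) * I * z) *
          Complex.exp (2 * (Real.pi : ℂ) * I * τ) ^ n) := by
  have hq : ‖exp (2 * (Real.pi : ℂ) * I * τ)‖ < 1 := UpperHalfPlane.norm_exp_two_pi_I_lt_one ⟨τ, hτ⟩
  simpa only [qPochhammerInf, mul_assoc, ← pow_succ'] using (gl11_denominator_identity_general
    (exp_ne_zero _) hq (exp_ne_zero _) (exp_mul_exp_zpow_ne_one hz hzτ)).tsum_eq.symm
end

section
/- For |q| < 1, the identity ∑_{n≥0} q^{(n+1/2)²/2} = η(2τ)²/η(τ) holds, where q = e^{2πiτ} and η(τ) := q^{1/24} ∏_{n≥1}(1−q^n). -/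
open Complex

/-- The Dedekind eta function `η(τ) = q^{1/24} ∏_{n≥1} (1 - q^n)`. -/
noncomputable def dedekindEta (τ : ℂ) : ℂ :=
  Complex.exp ((Real.pi : ℂ) * I * τ / 12) *
    ∏' n : ℕ, (1 - Complex.exp (2 * (Real.pi : ℂ) * I * τ) ^ (n + 1))

/-!
With `q = e^{2πiτ}`, pulling the factor `q^{1/8}` out of both sides leaves Gauss's identity
`∑ q^{n(n+1)/2} = ∏ (1 - q^{2j}) / (1 - q^{2j-1})`. Following Shanks, let `P n` be the partial
products of the right-hand side. The weighted sums `∑_{s ≤ n} (P n / P s) q^{s(2n+1)}` are exactly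
the partial sums `∑_{s ≤ 2n} q^{s(s+1)/2}`: passing from `n` to `n + 1` changes each summand by a
telescoping difference. On the other hand only the summand `s = 0`, which is `P n`, survives as
`n → ∞`, because the quotients `P n / P s` stay bounded.
-/

section FiniteIdentities

open Finset

variable {K : Type*} [Field K]

/-- The `n`-th partial product of Gauss's product `∏ (1 - q^{2j}) / (1 - q^{2j-1})`, `j ≥ 1`. The
factors are indexed from `j = 0`. -/
def gaussProd (q : K) (n : ℕ) : K :=
  ∏ j ∈ range n, (1 - q ^ (2 * j + 2)) / (1 - q ^ (2 * j + 1))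

/-- The summand of Shanks's finite form of Gauss's identity, in which `s` runs over `0, …, n`. -/
def shanksTerm (q : K) (n s : ℕ) : K :=
  gaussProd q n / gaussProd q s * q ^ (s * (2 * n + 1))

/-- The companion of `shanksTerm` under Wilf–Zeilberger summation: the difference of `shanksTerm`
in `n` is the difference of `shanksCompanion` in `s`. -/
def shanksCompanion (q : K) (n s : ℕ) : K :=
  shanksTerm q n s * ((1 - q ^ (2 * s)) / (1 - q ^ (2 * n + 1)))

lemma gaussProd_zero (q : K) : gaussProd q 0 = 1 :=
  prod_range_zero _

lemma gaussProd_succ (q : K) (n : ℕ) :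
    gaussProd q (n + 1) = gaussProd q n * ((1 - q ^ (2 * n + 2)) / (1 - q ^ (2 * n + 1))) :=
  prod_range_succ _ n

lemma shanksCompanion_zero (q : K) (n : ℕ) : shanksCompanion q n 0 = 0 := by
  simp [shanksCompanion]

lemma triangular_two_mul_add_one (n : ℕ) :
    (2 * n + 1) * (2 * n + 1 + 1) / 2 = (n + 1) * (2 * n + 1) := by
  rw [show (2 * n + 1) * (2 * n + 1 + 1) = (n + 1) * (2 * n + 1) * 2 by ring,
    Nat.mul_div_cancel _ two_pos]

lemma triangular_two_mul_add_two (n : ℕ) :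
    (2 * n + 2) * (2 * n + 2 + 1) / 2 = (n + 1) * (2 * n + 3) := by
  rw [show (2 * n + 2) * (2 * n + 2 + 1) = (n + 1) * (2 * n + 3) * 2 by ring,
    Nat.mul_div_cancel _ two_pos]

variable {q : K} (hq : ¬IsOfFinOrder q)
include hq

lemma one_sub_pow_succ_ne_zero (n : ℕ) : 1 - q ^ (n + 1) ≠ 0 := fun h ↦
  hq <| isOfFinOrder_iff_pow_eq_one.mpr ⟨n + 1, n.succ_pos, (sub_eq_zero.mp h).symm⟩

lemma gaussProd_ne_zero (n : ℕ) : gaussProd q n ≠ 0 :=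
  prod_ne_zero_iff.mpr fun j _ ↦
    div_ne_zero (one_sub_pow_succ_ne_zero hq (2 * j + 1)) (one_sub_pow_succ_ne_zero hq (2 * j))

lemma shanksTerm_self (n : ℕ) : shanksTerm q n n = q ^ (n * (2 * n + 1)) := by
  rw [shanksTerm, div_self (gaussProd_ne_zero hq n), one_mul]

lemma shanksCompanion_self_succ (n : ℕ) :
    shanksCompanion q n (n + 1) = q ^ ((n + 1) * (2 * n + 1)) := by
  have hP := gaussProd_ne_zero hq n
  have hodd := one_sub_pow_succ_ne_zero hq (2 * n)
  have heven := one_sub_pow_succ_ne_zero hq (2 * n + 1)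
  rw [shanksCompanion, shanksTerm, gaussProd_succ, mul_add_one 2 n]
  field_simp

lemma shanksTerm_succ_sub (n s : ℕ) :
    shanksTerm q (n + 1) s - shanksTerm q n s =
      shanksCompanion q n (s + 1) - shanksCompanion q n s := by
  have hP := gaussProd_ne_zero hq s
  have hn := one_sub_pow_succ_ne_zero hq (2 * n)
  have heven := one_sub_pow_succ_ne_zero hq (2 * s + 1)
  rw [shanksCompanion, shanksCompanion, shanksTerm, shanksTerm, shanksTerm, gaussProd_succ,
    gaussProd_succ, mul_add_one 2 s]
  field_simp
  ring

lemma sum_shanksTerm_succ (n : ℕ) :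
    ∑ s ∈ range (n + 1), shanksTerm q (n + 1) s =
      ∑ s ∈ range (n + 1), shanksTerm q n s + q ^ ((n + 1) * (2 * n + 1)) := by
  rw [← sub_eq_iff_eq_add', ← sum_sub_distrib]
  simp only [shanksTerm_succ_sub hq, sum_range_sub, shanksCompanion_self_succ hq,
    shanksCompanion_zero, sub_zero]

theorem sum_shanksTerm_eq_sum_pow_triangular (n : ℕ) :
    ∑ s ∈ range (n + 1), shanksTerm q n s =
      ∑ s ∈ range (2 * n + 1), q ^ (s * (s + 1) / 2) := by
  induction n with
  | zero => simp [shanksTerm_self hq]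
  | succ n ih =>
    rw [sum_range_succ, sum_shanksTerm_succ hq, ih, shanksTerm_self hq, mul_add_one 2 n,
      sum_range_succ _ (2 * n + 2), sum_range_succ _ (2 * n + 1),
      triangular_two_mul_add_one, triangular_two_mul_add_two]

lemma gaussProd_mul_prod_one_sub_pow (n : ℕ) :
    gaussProd q n * ∏ j ∈ range (2 * n), (1 - q ^ (j + 1)) =
      (∏ j ∈ range n, (1 - (q ^ 2) ^ (j + 1))) ^ 2 := by
  induction n with
  | zero => simp [gaussProd_zero]
  | succ n ih =>
    have hodd := one_sub_pow_succ_ne_zero hq (2 * n)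
    rw [mul_add_one 2 n, prod_range_succ, prod_range_succ, prod_range_succ, mul_pow, ← ih,
      gaussProd_succ, ← pow_mul]
    field_simp
    ring

end FiniteIdentities

section Limits

open Filter Finset Topology

variable {𝕜 : Type*} [NormedField 𝕜] {q : 𝕜} (hq : ‖q‖ < 1)
include hq

lemma not_isOfFinOrder_of_norm_lt_one : ¬IsOfFinOrder q := fun h ↦
  hq.ne (IsOfFinOrder.norm_eq_one h)

lemma norm_sq_lt_one : ‖q ^ 2‖ < 1 := by
  rw [norm_pow]
  exact pow_lt_one₀ (norm_nonneg q) hq two_ne_zero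

lemma summable_norm_neg_pow_succ : Summable fun n : ℕ ↦ ‖-q ^ (n + 1)‖ := by
  simpa only [norm_neg, norm_pow] using
    (summable_nat_add_iff 1).mpr (summable_geometric_of_lt_one (norm_nonneg q) hq)

variable [CompleteSpace 𝕜]

lemma multipliable_one_sub_pow_succ : Multipliable fun n : ℕ ↦ 1 - q ^ (n + 1) := by
  simpa only [sub_eq_add_neg] using
    multipliable_one_add_of_summable (f := fun n : ℕ ↦ -q ^ (n + 1))
      (summable_norm_neg_pow_succ hq)

lemma tprod_one_sub_pow_succ_ne_zero : ∏' n : ℕ, (1 - q ^ (n + 1)) ≠ 0 := by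
  simp only [sub_eq_add_neg]
  refine tprod_one_add_ne_zero_of_summable (fun n ↦ ?_) (summable_norm_neg_pow_succ hq)
  rw [← sub_eq_add_neg]
  exact one_sub_pow_succ_ne_zero (not_isOfFinOrder_of_norm_lt_one hq) n

lemma tendsto_gaussProd :
    Tendsto (gaussProd q) atTop
      (𝓝 ((∏' n : ℕ, (1 - (q ^ 2) ^ (n + 1))) ^ 2 / ∏' n : ℕ, (1 - q ^ (n + 1)))) := by
  have hq' := not_isOfFinOrder_of_norm_lt_one hq
  have hnum := (multipliable_one_sub_pow_succ (norm_sq_lt_one hq)).tendsto_prod_tprod_nat.pow 2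
  have hden := (multipliable_one_sub_pow_succ hq).tendsto_prod_tprod_nat.comp
    (tendsto_id.const_mul_atTop' two_pos)
  refine (hnum.div hden (tprod_one_sub_pow_succ_ne_zero hq)).congr fun n ↦ ?_
  refine (eq_div_of_mul_eq ?_ (gaussProd_mul_prod_one_sub_pow hq' n)).symm
  exact prod_ne_zero_iff.mpr fun j _ ↦ one_sub_pow_succ_ne_zero hq' j

lemma exists_norm_gaussProd_div_le : ∃ C, ∀ m n, ‖gaussProd q m / gaussProd q n‖ ≤ C := by
  have hP := tendsto_gaussProd hq
  have hL := div_ne_zero (pow_ne_zero 2 (tprod_one_sub_pow_succ_ne_zero (norm_sq_lt_one hq)))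
    (tprod_one_sub_pow_succ_ne_zero hq)
  obtain ⟨A, hA⟩ := hP.norm.bddAbove_range
  obtain ⟨B, hB⟩ := (hP.inv₀ hL).norm.bddAbove_range
  refine ⟨A * B, fun m n ↦ ?_⟩
  rw [div_eq_mul_inv, norm_mul]
  exact mul_le_mul (hA ⟨m, rfl⟩) (hB ⟨n, rfl⟩) (norm_nonneg _)
    ((norm_nonneg _).trans (hA ⟨m, rfl⟩))

lemma exists_norm_shanksTerm_succ_le : ∃ C, ∀ n s, ‖shanksTerm q n (s + 1)‖ ≤ C * ‖q‖ ^ n := by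
  obtain ⟨C, hC⟩ := exists_norm_gaussProd_div_le hq
  refine ⟨C, fun n s ↦ ?_⟩
  rw [shanksTerm, norm_mul, norm_pow]
  have hpow : ‖q‖ ^ ((s + 1) * (2 * n + 1)) ≤ ‖q‖ ^ n :=
    pow_le_pow_of_le_one (norm_nonneg q) hq.le (by nlinarith)
  exact mul_le_mul (hC n (s + 1)) hpow (by positivity) ((norm_nonneg _).trans (hC 0 0))

lemma tendsto_sum_shanksTerm_succ :
    Tendsto (fun n ↦ ∑ s ∈ range n, shanksTerm q n (s + 1)) atTop (𝓝 0) := by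
  obtain ⟨C, hC⟩ := exists_norm_shanksTerm_succ_le hq
  have hbound : Tendsto (fun n : ℕ ↦ C * (n * ‖q‖ ^ n)) atTop (𝓝 0) := by
    simpa only [mul_zero] using
      (tendsto_self_mul_const_pow_of_lt_one (norm_nonneg q) hq).const_mul C
  refine squeeze_zero_norm (fun n ↦ ?_) hbound
  calc ‖∑ s ∈ range n, shanksTerm q n (s + 1)‖
      ≤ ∑ _s ∈ range n, C * ‖q‖ ^ n := norm_sum_le_of_le _ fun s _ ↦ hC n s
    _ = C * (n * ‖q‖ ^ n) := by rw [sum_const, card_range, nsmul_eq_mul, mul_left_comm]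

lemma tendsto_sum_shanksTerm :
    Tendsto (fun n ↦ ∑ s ∈ range (n + 1), shanksTerm q n s) atTop
      (𝓝 ((∏' n : ℕ, (1 - (q ^ 2) ^ (n + 1))) ^ 2 / ∏' n : ℕ, (1 - q ^ (n + 1)))) := by
  simpa [sum_range_succ', shanksTerm, gaussProd_zero] using
    (tendsto_sum_shanksTerm_succ hq).add (tendsto_gaussProd hq)

lemma summable_pow_triangular : Summable fun n : ℕ ↦ q ^ (n * (n + 1) / 2) := by
  refine (summable_geometric_of_lt_one (norm_nonneg q) hq).of_norm_bounded fun n ↦ ?_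
  rw [norm_pow]
  refine pow_le_pow_of_le_one (norm_nonneg q) hq.le ?_
  rw [Nat.le_div_iff_mul_le two_pos]
  rcases n.eq_zero_or_pos with rfl | hn
  · rfl
  · exact Nat.mul_le_mul_left n (Nat.succ_le_succ hn)

theorem hasSum_pow_triangular :
    HasSum (fun n : ℕ ↦ q ^ (n * (n + 1) / 2))
      ((∏' n : ℕ, (1 - (q ^ 2) ^ (n + 1))) ^ 2 / ∏' n : ℕ, (1 - q ^ (n + 1))) := by
  have hsum := (summable_pow_triangular hq).hasSum
  have hpartial := tendsto_sum_shanksTerm hq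
  simp only [sum_shanksTerm_eq_sum_pow_triangular (not_isOfFinOrder_of_norm_lt_one hq)]
    at hpartial
  have hodd : Tendsto (fun n : ℕ ↦ 2 * n + 1) atTop atTop :=
    tendsto_atTop_mono (fun n ↦ show n ≤ 2 * n + 1 by omega) tendsto_id
  rwa [tendsto_nhds_unique (hsum.tendsto_sum_nat.comp hodd) hpartial] at hsum

end Limits

section EtaQuotient

open scoped Real

lemma exp_pi_mul_I_mul_add_half_sq (τ : ℂ) (n : ℕ) :
    exp (π * I * τ * ((n : ℂ) + 1 / 2) ^ 2) =
      exp (π * I * τ / 4) * exp (2 * π * I * τ) ^ (n * (n + 1) / 2) := by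
  rw [← exp_nat_mul, ← exp_add, Nat.cast_div (Nat.even_mul_succ_self n).two_dvd two_ne_zero]
  push_cast
  ring_nf

lemma dedekindEta_two_mul_sq_div (τ : ℂ) :
    dedekindEta (2 * τ) ^ 2 / dedekindEta τ =
      exp (π * I * τ / 4) * ((∏' n : ℕ, (1 - (exp (2 * π * I * τ) ^ 2) ^ (n + 1))) ^ 2 /
        ∏' n : ℕ, (1 - exp (2 * π * I * τ) ^ (n + 1))) := by
  have hnome : exp (2 * π * I * (2 * τ)) = exp (2 * π * I * τ) ^ 2 := by
    rw [← exp_nat_mul]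
    ring_nf
  have hprefactor : exp (π * I * (2 * τ) / 12) ^ 2 / exp (π * I * τ / 12) =
      exp (π * I * τ / 4) := by
    rw [← exp_nat_mul, ← exp_sub]
    ring_nf
  rw [dedekindEta, dedekindEta, hnome, mul_pow, mul_div_mul_comm, hprefactor]

end EtaQuotient

theorem partial_theta_eta_quotient (τ : ℂ) (hτ : 0 < τ.im) :
    ∑' n : ℕ, Complex.exp ((Real.pi : ℂ) * I * τ * ((n : ℂ) + 1 / 2) ^ 2) =
      dedekindEta (2 * τ) ^ 2 / dedekindEta τ := by
  have hq : ‖exp (2 * Real.pi * I * τ)‖ < 1 := UpperHalfPlane.norm_exp_two_pi_I_lt_one ⟨τ, hτ⟩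
  simp only [exp_pi_mul_I_mul_add_half_sq]
  rw [tsum_mul_left, (hasSum_pow_triangular hq).tsum_eq, dedekindEta_two_mul_sq_div]
end
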